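/- Let n and k be integers with n ≥ 3 and 2 ≤ k ≤ n−1. For every r > 0 and every φ ∈ [0,π/2], (2n−k−2)·(1/2) tanh(r/2) + (k−2)·(1/2) coth(r/2) + tr(M'(r,φ) M(r,φ)^{-1}) = (k − 1 + 2n sinh²(r/2)) / (2 sinh(r/2) cosh(r/2)). In particular this quantity (the mean curvature of the tube of radius r around W_w at a point reached along a unit normal of Kähler angle φ) does not depend on φ, so the tubes around W_w have constant mean curvature and form an isoparametric family. -/

import Mathlib

/- Context: `M(t,φ)` is the 3×3 block, corresponding to the vectors `Z, P̄ξ, F̄ξ`,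
of the endomorphism `D(t)` built from Jacobi fields along a geodesic normal to the
submanifold `W_w` of codimension `k` in `ℂH^n`, for a unit normal `ξ` of Kähler
angle `φ`. The shape operator of the tube of radius `r` around `W_w` at a point
reached along `ξ` is block diagonal with eigenvalue `(1/2)tanh(r/2)` of
multiplicity `2n−k−2`, eigenvalue `(1/2)coth(r/2)` of multiplicity `k−2`, and the
3×3 block `M'(r,φ) M(r,φ)⁻¹`; its trace is the mean curvature of the tube. -/

open Real

noncomputable section

/-- The 3×3 block `M(t,φ)` (in the basis `Z, P̄ξ, F̄ξ`) of the endomorphism `D(t)`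
built from Jacobi fields along a geodesic normal to `W_w` in `ℂH^n`, for a unit
normal `ξ` of Kähler angle `φ`; the columns are the Jacobi fields `ζ_Z`,
`ζ_{P̄ξ}`, `ζ_{F̄ξ}`. -/
def M (t φ : ℝ) : Matrix (Fin 3) (Fin 3) ℝ :=
  Matrix.of
    ![![cosh (t / 2),
        -(sin φ * sinh (t / 2)),
        0],
      ![-(sin φ * (cos φ ^ 2 + sin φ ^ 2 * cosh (t / 2)) * sinh (t / 2)),
        cos φ ^ 2 * cosh (t / 2) + sin φ ^ 2 * cosh t,
        2 * sin φ * cos φ * (cosh (t / 2) - 1) * sinh (t / 2)],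
      ![-(cos φ * sin φ ^ 2 * (cosh (t / 2) - 1) * sinh (t / 2)),
        -(sin φ * cos φ * (cosh (t / 2) - cosh t)),
        2 * (1 + cos φ ^ 2 * (cosh (t / 2) - 1)) * sinh (t / 2)]]

/-- The entrywise derivative `M'(r,φ)` of `M` with respect to the first variable. -/
def M' (r φ : ℝ) : Matrix (Fin 3) (Fin 3) ℝ :=
  Matrix.of fun i j => deriv (fun t => M t φ i j) r

/-- Jacobi's formula for the derivative of the determinant of a 3×3 matrix function. -/
theorem hasDerivAt_det_fin_three {A : ℝ → Matrix (Fin 3) (Fin 3) ℝ}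
    {A' : Matrix (Fin 3) (Fin 3) ℝ} {x : ℝ}
    (h : ∀ i j, HasDerivAt (fun t => A t i j) (A' i j) x) :
    HasDerivAt (fun t => (A t).det) (Matrix.trace (A' * (A x).adjugate)) x := by
  simp only [Matrix.det_fin_three]
  refine HasDerivAt.congr_deriv ((((((((h 0 0).fun_mul (h 1 1)).fun_mul (h 2 2)).fun_sub
    (((h 0 0).fun_mul (h 1 2)).fun_mul (h 2 1))).fun_sub
    (((h 0 1).fun_mul (h 1 0)).fun_mul (h 2 2))).fun_add
    (((h 0 1).fun_mul (h 1 2)).fun_mul (h 2 0))).fun_add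
    (((h 0 2).fun_mul (h 1 0)).fun_mul (h 2 1))).fun_sub
    (((h 0 2).fun_mul (h 1 1)).fun_mul (h 2 0))) ?_
  simp [Matrix.adjugate_fin_three, Matrix.trace_fin_three, Matrix.mul_apply, Fin.sum_univ_three]
  ring

theorem hasDerivAt_M (r φ : ℝ) (i j : Fin 3) :
    HasDerivAt (fun t => M t φ i j) (M' r φ i j) r := by
  refine DifferentiableAt.hasDerivAt ?_
  fin_cases i <;> fin_cases j <;> simp [M] <;> fun_prop

theorem det_M (t φ : ℝ) : (M t φ).det = 2 * cosh (t / 2) ^ 3 * sinh (t / 2) := by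
  have hP := sin_sq_add_cos_sq φ
  have hQ := sinh_sq (t / 2)
  have hT : cosh t = 2 * cosh (t / 2) ^ 2 - 1 := by
    have h := cosh_two_mul (t / 2)
    rw [mul_div_cancel₀ t two_ne_zero] at h
    linear_combination h + hQ
  simp only [M, Matrix.det_fin_three, Matrix.of_apply, Matrix.cons_val]
  generalize cosh (t / 2) = c at *
  generalize sinh (t / 2) = s at *
  linear_combination
    (2 * c * s * cos φ ^ 2 * c * (c - 1)
      - 2 * sin φ ^ 2 * s ^ 3 * (1 + cos φ ^ 2 * (c - 1) + (c - 1)) + 2 * c ^ 3 * s) * hP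
      + 2 * c * s * sin φ ^ 2 * hT - 2 * sin φ ^ 2 * c * s * hQ

theorem trace_M'_mul_adjugate (r φ : ℝ) :
    Matrix.trace (M' r φ * (M r φ).adjugate)
      = 3 * cosh (r / 2) ^ 2 * sinh (r / 2) ^ 2 + cosh (r / 2) ^ 4 := by
  have h := hasDerivAt_det_fin_three (hasDerivAt_M r φ)
  simp only [det_M] at h
  have hd : HasDerivAt (fun t : ℝ => t / 2) (1 / 2) r := (hasDerivAt_id r).div_const 2
  refine h.unique ?_
  refine HasDerivAt.congr_deriv (((hd.cosh.fun_pow 3).const_mul 2).fun_mul hd.sinh) ?_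
  norm_num
  ring

/-- for integers `n ≥ 3`, `2 ≤ k ≤ n−1`, every `r > 0` and every
`φ ∈ [0,π/2]`,
`(2n−k−2)·(1/2)tanh(r/2) + (k−2)·(1/2)coth(r/2) + tr(M'(r,φ) M(r,φ)⁻¹)
  = (k − 1 + 2n sinh²(r/2)) / (2 sinh(r/2) cosh(r/2))`.
In particular the mean curvature of the tube of radius `r` around `W_w` does not
depend on `φ`, so the tubes around `W_w` have constant mean curvature and form an
isoparametric family. -/
theorem mean_curvature_tube (n k : ℕ) (hn : 3 ≤ n) (hk : 2 ≤ k) (hk' : k ≤ n - 1)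
    (r : ℝ) (hr : 0 < r) (φ : ℝ) (hφ : φ ∈ Set.Icc 0 (π / 2)) :
    (2 * (n : ℝ) - k - 2) * (2⁻¹ * tanh (r / 2))
        + ((k : ℝ) - 2) * (2⁻¹ * (cosh (r / 2) / sinh (r / 2)))
        + Matrix.trace (M' r φ * (M r φ)⁻¹)
      = ((k : ℝ) - 1 + 2 * n * sinh (r / 2) ^ 2)
          / (2 * sinh (r / 2) * cosh (r / 2)) := by
  have hs : sinh (r / 2) ≠ 0 := (sinh_pos_iff.2 (half_pos hr)).ne'
  have hc : cosh (r / 2) ≠ 0 := (cosh_pos _).ne'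
  rw [Matrix.inv_def, Ring.inverse_eq_inv', Matrix.mul_smul, Matrix.trace_smul, det_M,
    trace_M'_mul_adjugate, tanh_eq_sinh_div_cosh, smul_eq_mul]
  have hQ := cosh_sq (r / 2)
  field_simp
  linear_combination ((k : ℝ) - 1) * hQ
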